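/- Let f, g : ℝⁿ → [0,∞) be measurable, radial and radially non-increasing, i.e. f(x) ≥ f(y) whenever ‖x‖ ≤ ‖y‖ and likewise for g; assume f is integrable and g is bounded. Then the convolution h(x) := ∫_{ℝⁿ} f(ξ) g(x−ξ) dξ is radial and radially non-increasing: h(a) ≥ h(b) whenever ‖a‖ ≤ ‖b‖. -/

import Mathlib

open MeasureTheory

/-!
The proof is a two-point symmetrization. For `a ≠ b` let `σ` be the reflection in the perpendicular
bisector of `a` and `b`. It preserves Lebesgue measure and exchanges the distances to `a` and `b`,
so `F ξ = g (a - ξ) - g (b - ξ)` satisfies `F ∘ σ = -F`, whence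
`2 ∫ f F = ∫ (f - f ∘ σ) F`. This integrand is pointwise nonnegative: since `‖a‖ ≤ ‖b‖`, the origin
lies on the side of `a`, so a point nearer to `a` than to `b` is moved away from the origin by `σ`,
and both factors are nonnegative there; on the other side both are nonpositive. The geometric facts
are `norm_sub_bisectorReflection`, `norm_sub_bisectorReflection'` and
`sq_norm_bisectorReflection_sub`.
-/

/-- The reflection in the perpendicular bisector of `a` and `b`, written as `ξ ↦ b - R (a - ξ)`
where `R` is the linear reflection in the hyperplane orthogonal to `b - a`. -/
noncomputable def bisectorReflection {n : ℕ} (a b ξ : EuclideanSpace ℝ (Fin n)) :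
    EuclideanSpace ℝ (Fin n) :=
  b - (Submodule.span ℝ {b - a})ᗮ.reflection (a - ξ)

lemma norm_sub_bisectorReflection {n : ℕ} (a b ξ : EuclideanSpace ℝ (Fin n)) :
    ‖b - bisectorReflection a b ξ‖ = ‖a - ξ‖ := by
  simp only [bisectorReflection, sub_sub_cancel, LinearIsometryEquiv.norm_map]

lemma norm_sub_bisectorReflection' {n : ℕ} (a b ξ : EuclideanSpace ℝ (Fin n)) :
    ‖a - bisectorReflection a b ξ‖ = ‖b - ξ‖ := by
  have h : a - bisectorReflection a b ξ
      = (Submodule.span ℝ {b - a})ᗮ.reflection (b - ξ) := by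
    have h1 : b - ξ = (b - a) + (a - ξ) := by abel
    rw [h1, map_add, Submodule.reflection_orthogonalComplement_singleton_eq_neg,
      bisectorReflection]
    abel
  rw [h, LinearIsometryEquiv.norm_map]

/-- The sign of `‖σ ξ‖² - ‖ξ‖²` is determined by whether `ξ` is nearer to `a` or to `b`. -/
lemma sq_norm_bisectorReflection_sub {n : ℕ} {a b : EuclideanSpace ℝ (Fin n)} (hab : a ≠ b)
    (ξ : EuclideanSpace ℝ (Fin n)) :
    ‖b - a‖ ^ 2 * (‖bisectorReflection a b ξ‖ ^ 2 - ‖ξ‖ ^ 2)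
      = (‖b - ξ‖ ^ 2 - ‖a - ξ‖ ^ 2) * (‖b‖ ^ 2 - ‖a‖ ^ 2) := by
  have hu : ‖b - a‖ ^ 2 ≠ 0 := by
    simpa [sub_eq_zero] using hab.symm
  -- `σ ξ = ξ + c (b - a)` for this coefficient `c`.
  obtain ⟨c, hc⟩ : ∃ c : ℝ, c = 1 + 2 * (inner ℝ (b - a) (a - ξ) / ‖b - a‖ ^ 2) := ⟨_, rfl⟩
  have hcu : c * ‖b - a‖ ^ 2 = ‖b - a‖ ^ 2 + 2 * inner ℝ (b - a) (a - ξ) := by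
    rw [hc, add_mul, one_mul, mul_assoc, div_mul_cancel₀ _ hu]
  have hσ : bisectorReflection a b ξ = ξ + c • (b - a) := by
    rw [bisectorReflection, Submodule.reflection_orthogonal_apply,
      Submodule.reflection_singleton_apply, hc]
    simp only [RCLike.ofReal_real_eq_id, id]
    module
  have hN : ‖bisectorReflection a b ξ‖ ^ 2 - ‖ξ‖ ^ 2
      = 2 * c * inner ℝ ξ (b - a) + c * (c * ‖b - a‖ ^ 2) := by
    rw [hσ, norm_add_sq_real, inner_smul_right, norm_smul, mul_pow, Real.norm_eq_abs, sq_abs]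
    ring
  have e1 : ‖b - ξ‖ ^ 2 - ‖a - ξ‖ ^ 2 = c * ‖b - a‖ ^ 2 := by
    rw [hcu]
    have h1 : b - ξ = (b - a) + (a - ξ) := by abel
    rw [h1, norm_add_sq_real]
    ring
  have e2 : ‖b‖ ^ 2 - ‖a‖ ^ 2 = ‖b - a‖ ^ 2 + 2 * inner ℝ (b - a) a := by
    have h1 : b = (b - a) + a := by abel
    conv_lhs => rw [h1, norm_add_sq_real]
    ring
  rw [inner_sub_right (b - a) a ξ, ← real_inner_comm (b - a) ξ] at hcu
  rw [hN, e1, e2]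
  linear_combination (c * ‖b - a‖ ^ 2) * hcu

lemma norm_le_norm_bisectorReflection {n : ℕ} {a b : EuclideanSpace ℝ (Fin n)} (hab : a ≠ b)
    (h : ‖a‖ ≤ ‖b‖) {ξ : EuclideanSpace ℝ (Fin n)} (hξ : ‖a - ξ‖ ≤ ‖b - ξ‖) :
    ‖ξ‖ ≤ ‖bisectorReflection a b ξ‖ := by
  have hu : 0 < ‖b - a‖ ^ 2 := by
    have := norm_pos_iff.2 (sub_ne_zero.2 hab.symm)
    positivity
  have key := sq_norm_bisectorReflection_sub hab ξ
  have h1 : 0 ≤ ‖b - ξ‖ ^ 2 - ‖a - ξ‖ ^ 2 := sub_nonneg.2 (by gcongr)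
  have h2 : 0 ≤ ‖b‖ ^ 2 - ‖a‖ ^ 2 := sub_nonneg.2 (by gcongr)
  have h3 := nonneg_of_mul_nonneg_right (key ▸ mul_nonneg h1 h2) hu
  exact le_of_sq_le_sq (sub_nonneg.1 h3) (norm_nonneg _)

lemma norm_bisectorReflection_le_norm {n : ℕ} {a b : EuclideanSpace ℝ (Fin n)} (hab : a ≠ b)
    (h : ‖a‖ ≤ ‖b‖) {ξ : EuclideanSpace ℝ (Fin n)} (hξ : ‖b - ξ‖ ≤ ‖a - ξ‖) :
    ‖bisectorReflection a b ξ‖ ≤ ‖ξ‖ := by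
  have hu : 0 < ‖b - a‖ ^ 2 := by
    have := norm_pos_iff.2 (sub_ne_zero.2 hab.symm)
    positivity
  have key := sq_norm_bisectorReflection_sub hab ξ
  have h1 : ‖b - ξ‖ ^ 2 - ‖a - ξ‖ ^ 2 ≤ 0 := sub_nonpos.2 (by gcongr)
  have h2 : 0 ≤ ‖b‖ ^ 2 - ‖a‖ ^ 2 := sub_nonneg.2 (by gcongr)
  have h3 : ‖bisectorReflection a b ξ‖ ^ 2 - ‖ξ‖ ^ 2 ≤ 0 := by
    by_contra! h4
    have := mul_pos hu h4
    have := mul_nonpos_of_nonpos_of_nonneg h1 h2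
    linarith
  exact le_of_sq_le_sq (sub_nonpos.1 h3) (norm_nonneg _)

lemma measurePreserving_bisectorReflection {n : ℕ} (a b : EuclideanSpace ℝ (Fin n)) :
    MeasurePreserving (bisectorReflection a b) volume volume :=
  (Measure.measurePreserving_sub_left volume b).comp
    (((Submodule.span ℝ {b - a})ᗮ.reflection.measurePreserving).comp
      (Measure.measurePreserving_sub_left volume a))

/-- The convolution of two nonnegative symmetric-decreasing functions is
symmetric-decreasing. -/
theorem stmt18 (n : ℕ) (hn : 1 ≤ n)
    (f g : EuclideanSpace ℝ (Fin n) → ℝ)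
    (hfm : Measurable f) (hgm : Measurable g)
    (hf0 : ∀ x, 0 ≤ f x) (hg0 : ∀ x, 0 ≤ g x)
    (hfrad : ∀ x y : EuclideanSpace ℝ (Fin n), ‖x‖ ≤ ‖y‖ → f y ≤ f x)
    (hgrad : ∀ x y : EuclideanSpace ℝ (Fin n), ‖x‖ ≤ ‖y‖ → g y ≤ g x)
    (hfint : Integrable f volume) (Mg : ℝ) (hgb : ∀ x, g x ≤ Mg) :
    ∀ a b : EuclideanSpace ℝ (Fin n), ‖a‖ ≤ ‖b‖ →
      (∫ ξ : EuclideanSpace ℝ (Fin n), f ξ * g (b - ξ)) ≤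
        ∫ ξ : EuclideanSpace ℝ (Fin n), f ξ * g (a - ξ) := by
  intro a b h
  rcases eq_or_ne a b with rfl | hab
  · exact le_rfl
  have hint : ∀ c, Integrable (fun ξ => f ξ * g (c - ξ)) volume := fun c =>
    hfint.mul_bdd (c := Mg) (hgm.comp (measurable_const.sub measurable_id)).aestronglyMeasurable
      (Filter.Eventually.of_forall fun ξ => by
        rw [Real.norm_eq_abs, abs_of_nonneg (hg0 _)]; exact hgb _)
  have hgeq : ∀ x y : EuclideanSpace ℝ (Fin n), ‖x‖ = ‖y‖ → g x = g y := fun x y e =>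
    le_antisymm (hgrad y x e.ge) (hgrad x y e.le)
  have hmp := measurePreserving_bisectorReflection a b
  set G : EuclideanSpace ℝ (Fin n) → ℝ := fun ξ => f ξ * g (a - ξ) - f ξ * g (b - ξ) with hG
  have hF : Integrable G volume := (hint a).sub (hint b)
  have hGσ : ∀ ξ, G (bisectorReflection a b ξ)
      = -(f (bisectorReflection a b ξ) * (g (a - ξ) - g (b - ξ))) := fun ξ => by
    simp only [hG]
    rw [hgeq _ _ (norm_sub_bisectorReflection' a b ξ), hgeq _ _ (norm_sub_bisectorReflection a b ξ)]
    ring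
  have hcomp : ∫ ξ, G (bisectorReflection a b ξ) = ∫ ξ, G ξ := by
    have := integral_map hmp.measurable.aemeasurable (f := G)
      (by rw [hmp.map_eq]; exact hF.aestronglyMeasurable)
    rw [hmp.map_eq] at this
    exact this.symm
  have hsum : ∫ ξ, (G ξ + G (bisectorReflection a b ξ)) = 2 * ∫ ξ, G ξ := by
    have hFσ : Integrable (fun ξ => G (bisectorReflection a b ξ)) volume :=
      hmp.integrable_comp_of_integrable hF
    rw [integral_add hF hFσ, hcomp, two_mul]
  have hnn : 0 ≤ ∫ ξ, (G ξ + G (bisectorReflection a b ξ)) := by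
    refine integral_nonneg fun ξ => ?_
    have e : G ξ + G (bisectorReflection a b ξ)
        = (f ξ - f (bisectorReflection a b ξ)) * (g (a - ξ) - g (b - ξ)) := by
      rw [hGσ]; simp only [hG]; ring
    change 0 ≤ G ξ + G (bisectorReflection a b ξ)
    rw [e]
    rcases le_total ‖a - ξ‖ ‖b - ξ‖ with hξ | hξ
    · exact mul_nonneg
        (sub_nonneg.2 (hfrad _ _ (norm_le_norm_bisectorReflection hab h hξ)))
        (sub_nonneg.2 (hgrad _ _ hξ))
    · exact mul_nonneg_of_nonpos_of_nonpos
        (sub_nonpos.2 (hfrad _ _ (norm_bisectorReflection_le_norm hab h hξ)))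
        (sub_nonpos.2 (hgrad _ _ hξ))
  have hfin : ∫ ξ, G ξ = (∫ ξ, f ξ * g (a - ξ)) - ∫ ξ, f ξ * g (b - ξ) :=
    integral_sub (hint a) (hint b)
  linarith
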